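/- Per-group optimization decomposes over satisfied complementary voters: assume unit-cost projects and a single group g = z_g with budget b. Partition the voters into C = { i : t_g^i = 1 } and S = { i : t_g^i = 0 }. Then the maximum of U(Q) over Q ⊆ z_g with |Q| ≤ b equals the maximum, over subsets C' ⊆ C with |⋃_{i∈C'} s_g^i| ≤ b and over sets Q with ⋃_{i∈C'} s_g^i ⊆ Q ⊆ z_g and |Q| ≤ b, of Σ_{i∈C'} min(f_g^i, |s_g^i|) + Σ_{i∈S} min(f_g^i, |Q ∩ s_g^i|). -/

import Mathlib

/-!
Per-group optimization decomposes over the subset of complementarity voters that get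
fully satisfied.
-/

open Finset

section ComplementaryVoters

variable {ι α M : Type*} [DecidableEq α]

/-- The voters in `C` whose approval sets `s i` are entirely funded by the outcome `Q`. -/
def satisfiedVoters (C : Finset ι) (s : ι → Finset α) (Q : Finset α) : Finset ι :=
  C.filter fun i => s i ⊆ Q

theorem subset_satisfiedVoters_iff {C C' : Finset ι} {s : ι → Finset α} {Q : Finset α} :
    C' ⊆ satisfiedVoters C s Q ↔ C' ⊆ C ∧ C'.biUnion s ⊆ Q := by
  rw [biUnion_subset]
  simp only [satisfiedVoters, subset_iff, mem_filter, forall_and]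

/-- The social welfare `U(Q)`: voter `i` values the funded part `Q ∩ s i` of its approval set by
`v i`, except that a complementarity voter (`t i`) gets nothing unless all of `s i` is funded. In
the unit-cost model `v i A = min (f i) |A|`. -/
def socialWelfare [Fintype ι] [AddCommMonoid M] (t : ι → Prop) [DecidablePred t]
    (s : ι → Finset α) (v : ι → Finset α → M) (Q : Finset α) : M :=
  ∑ i, if t i then (if s i ⊆ Q then v i (Q ∩ s i) else 0) else v i (Q ∩ s i)

theorem socialWelfare_eq_sum_satisfiedVoters_add_sum [Fintype ι] [AddCommMonoid M]
    (t : ι → Prop) [DecidablePred t] (s : ι → Finset α) (v : ι → Finset α → M) (Q : Finset α) :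
    socialWelfare t s v Q =
      (∑ i ∈ satisfiedVoters (univ.filter t) s Q, v i (s i)) +
        ∑ i ∈ univ.filter fun i => ¬t i, v i (Q ∩ s i) := by
  rw [socialWelfare, sum_ite, satisfiedVoters, sum_filter (s · ⊆ Q)]
  congr 1
  refine sum_congr rfl fun i _ => if_ctx_congr Iff.rfl (fun hsat => ?_) fun _ => rfl
  rw [inter_eq_right.mpr hsat]

variable [AddCommMonoid M] [SemilatticeSup M] [OrderBot M] [IsOrderedAddMonoid M]
  [CanonicallyOrderedAdd M]

/-- For a fixed outcome `Q`, the admissible `C'` are exactly the subsets of `satisfiedVoters C s Q`,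
and the sum over `C'` is largest for the whole of it. -/
theorem sup_sum_satisfiedVoters_add (z : Finset α) (p : Finset α → Prop) [DecidablePred p]
    (hp : Antitone p) (C : Finset ι) (s : ι → Finset α) (w : ι → M) (r : Finset α → M) :
    (z.powerset.filter p).sup (fun Q => (∑ i ∈ satisfiedVoters C s Q, w i) + r Q) =
      (C.powerset.filter fun C' => p (C'.biUnion s)).sup fun C' =>
        (z.powerset.filter fun Q => C'.biUnion s ⊆ Q ∧ p Q).sup fun Q =>
          (∑ i ∈ C', w i) + r Q := by
  apply le_antisymm
  · refine Finset.sup_le fun Q hQ => ?_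
    obtain ⟨hQz, hpQ⟩ := mem_filter.mp hQ
    obtain ⟨hsub, hcover⟩ := subset_satisfiedVoters_iff.mp (Subset.refl (satisfiedVoters C s Q))
    have hsat : satisfiedVoters C s Q ∈ C.powerset.filter fun C' => p (C'.biUnion s) :=
      mem_filter.mpr ⟨mem_powerset.mpr hsub, hp hcover hpQ⟩
    exact le_sup_of_le hsat (le_sup_of_le (mem_filter.mpr ⟨hQz, hcover, hpQ⟩) le_rfl)
  · refine Finset.sup_le fun C' hC' => Finset.sup_le fun Q hQ => ?_
    obtain ⟨hQz, hcover, hpQ⟩ := mem_filter.mp hQ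
    have hsub : C' ⊆ satisfiedVoters C s Q :=
      subset_satisfiedVoters_iff.mpr ⟨mem_powerset.mp (mem_filter.mp hC').1, hcover⟩
    exact le_sup_of_le (mem_filter.mpr ⟨hQz, hpQ⟩) (by gcongr)

/-- A `C'` with `⋃_{i ∈ C'} s i ⊈ z` admits no outcome `Q`, so its inner supremum is just `⊥`. -/
theorem per_group_complementary_decomposition_general [Fintype ι] (z : Finset α)
    (p : Finset α → Prop) [DecidablePred p] (hp : Antitone p) (t : ι → Prop) [DecidablePred t]
    (s : ι → Finset α) (v : ι → Finset α → M) :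
    (z.powerset.filter p).sup (socialWelfare t s v) =
      ((univ.filter t).powerset.filter fun C' => p (C'.biUnion s)).sup fun C' =>
        (z.powerset.filter fun Q => C'.biUnion s ⊆ Q ∧ p Q).sup fun Q =>
          (∑ i ∈ C', v i (s i)) + ∑ i ∈ univ.filter fun i => ¬t i, v i (Q ∩ s i) := by
  rw [← sup_sum_satisfiedVoters_add z p hp]
  exact sup_congr rfl fun Q _ => socialWelfare_eq_sum_satisfiedVoters_add_sum t s v Q

end ComplementaryVoters

/-- Single group `zg` of unit-cost projects, budget `b`; voters with
allocations `f`, approvals `s i ⊆ zg`, and complementarity answers `t`. The maximum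
social welfare over `Q ⊆ zg` with `|Q| ≤ b` equals the maximum, over subsets `C'` of
the complementarity voters with `|⋃_{i ∈ C'} s i| ≤ b` and over outcomes `Q` with
`⋃_{i ∈ C'} s i ⊆ Q ⊆ zg`, `|Q| ≤ b`, of
`Σ_{i ∈ C'} min (f i) |s i| + Σ_{i ∈ S} min (f i) |Q ∩ s i|`. -/
theorem per_group_complementary_decomposition
    {α : Type*} [Fintype α] [DecidableEq α] (n b : ℕ)
    (zg : Finset α) (f : Fin n → ℕ) (s : Fin n → Finset α)
    (hs : ∀ i, s i ⊆ zg) (t : Fin n → Bool) :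
    (zg.powerset.filter fun Q => Q.card ≤ b).sup
        (fun Q => ∑ i,
          if t i then (if s i ⊆ Q then min (f i) ((Q ∩ s i).card) else 0)
          else min (f i) ((Q ∩ s i).card)) =
      ((Finset.univ.filter fun i : Fin n => t i = true).powerset.filter
          fun C' => (C'.biUnion s).card ≤ b).sup
        fun C' =>
          (zg.powerset.filter fun Q => C'.biUnion s ⊆ Q ∧ Q.card ≤ b).sup
            fun Q =>
              (∑ i ∈ C', min (f i) (s i).card) +
                ∑ i ∈ Finset.univ.filter fun i : Fin n => ¬(t i = true),
                  min (f i) ((Q ∩ s i).card) :=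
  per_group_complementary_decomposition_general zg (fun Q => Q.card ≤ b)
    (fun _ _ hsub hcard => (card_le_card hsub).trans hcard) (fun i => t i = true) s
    fun i A => min (f i) A.card
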